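/- Let C ⊆ ℝⁿ be a body of revolution and let u be a unit vector with t = ⟨e_n,u⟩ ∈ (−1,1). Then there exists x ∈ F(C,u) such that C ∩ {y ∈ ℝⁿ : ⟨e_n,y⟩ = ⟨e_n,x⟩} = {⟨e_n,x⟩·e_n + w : w ∈ ℝⁿ, ⟨e_n,w⟩ = 0, ‖w‖ ≤ R_C(t)}. Moreover, the limits r₊ = lim_{t→1⁻} R_C(t) and r₋ = lim_{t→−1⁺} R_C(t) exist, and F(C, e_n) = {h̄_C(1)·e_n + w : w ∈ ℝⁿ, ⟨e_n,w⟩ = 0, ‖w‖ ≤ r₊} and F(C, −e_n) = {−h̄_C(−1)·e_n + w : w ∈ ℝⁿ, ⟨e_n,w⟩ = 0, ‖w‖ ≤ r₋}. -/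

import Mathlib

open Set Filter Topology Function
open scoped RealInnerProductSpace Pointwise

/-- Euclidean space `ℝ^(n+1)`. -/
abbrev Euc (n : ℕ) := EuclideanSpace ℝ (Fin (n + 1))

/-- The last standard basis vector `e_n`. -/
noncomputable def eAx (n : ℕ) : Euc n := EuclideanSpace.single (Fin.last n) (1 : ℝ)

/-- Support function of a set `K`. -/
noncomputable def suppFn {n : ℕ} (K : Set (Euc n)) (u : Euc n) : ℝ :=
  sSup ((fun x => ⟪x, u⟫) '' K)

/-- The face of `K` in direction `u`. -/
def face {n : ℕ} (K : Set (Euc n)) (u : Euc n) : Set (Euc n) :=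
  {x ∈ K | ⟪x, u⟫ = suppFn K u}

/-- `C` is a body of revolution with axis `e_n`: it is invariant under every linear
isometry fixing `e_n`. -/
def IsRevBody {n : ℕ} (C : Set (Euc n)) : Prop :=
  C.Nonempty ∧ IsCompact C ∧ Convex ℝ C ∧
    ∀ ρ : Euc n ≃ₗᵢ[ℝ] Euc n, ρ (eAx n) = eAx n → ρ '' C = C

/-- The restricted support function `h̄_C(t) = h_C(t·e_n + √(1-t²)·ū)`. -/
noncomputable def hbar {n : ℕ} (C : Set (Euc n)) (ub : Euc n) (t : ℝ) : ℝ :=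
  suppFn C (t • eAx n + Real.sqrt (1 - t ^ 2) • ub)

/-- The right derivative `∂₊h̄_C(t)` (as a limit along `𝓝[>] t`; it exists for bodies of
revolution). -/
noncomputable def rightDeriv (h : ℝ → ℝ) (t : ℝ) : ℝ :=
  limUnder (𝓝[>] t) fun s => (h s - h t) / (s - t)

/-- The profile function `R_C(t) = √(1-t²)·(h̄_C(t) - t·∂₊h̄_C(t))`. -/
noncomputable def RC {n : ℕ} (C : Set (Euc n)) (ub : Euc n) (t : ℝ) : ℝ :=
  Real.sqrt (1 - t ^ 2) * (hbar C ub t - t * rightDeriv (hbar C ub) t)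

/-!
The right derivative of a support function along a curve `γ` is the maximum of `⟪·, γ'⟫` over the
face in direction `γ t`. Along the meridian `γ t = t e + √(1 - t²) ū` one has
`√(1 - t²) (γ t - t γ' t) = ū`, so `R_C t = ⟪x, ū⟫` for a point `x` of the face in direction `γ t`.
Among the points of `C` at the same height, `x` is then the farthest in direction `ū`, and
rotational symmetry and convexity turn this into a disk of radius `⟪x, ū⟫`. At the poles, the limit
of `R_C` is the maximum of `⟪·, ū⟫` over the polar face, because faces depend upper
semicontinuously on their direction.
-/

section SupportFunction

variable {n : ℕ} {K : Set (Euc n)} {u v x y : Euc n}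

lemma bddAbove_inner_image (hK : IsCompact K) (u : Euc n) :
    BddAbove ((fun x => ⟪x, u⟫) '' K) :=
  hK.bddAbove_image (by fun_prop)

lemma inner_le_suppFn (hK : IsCompact K) (hx : x ∈ K) (u : Euc n) : ⟪x, u⟫ ≤ suppFn K u :=
  le_csSup (bddAbove_inner_image hK u) (mem_image_of_mem _ hx)

lemma inner_le_of_mem_face (hK : IsCompact K) (hx : x ∈ face K u) (hy : y ∈ K) :
    ⟪y, u⟫ ≤ ⟪x, u⟫ :=
  (inner_le_suppFn hK hy u).trans_eq hx.2.symm

lemma isCompact_face (hK : IsCompact K) (u : Euc n) : IsCompact (face K u) :=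
  hK.inter_right (isClosed_eq (by fun_prop) continuous_const)

lemma face_nonempty (hK : IsCompact K) (hne : K.Nonempty) (u : Euc n) : (face K u).Nonempty := by
  obtain ⟨x, hx, hmax⟩ := hK.exists_sSup_image_eq hne
    (f := fun x => ⟪x, u⟫) (by fun_prop)
  exact ⟨x, hx, hmax.symm⟩

lemma exists_mem_face_forall_inner_le (hK : IsCompact K) (hne : K.Nonempty) (u v : Euc n) :
    ∃ x ∈ face K u, ∀ y ∈ face K u, ⟪y, v⟫ ≤ ⟪x, v⟫ :=
  (isCompact_face hK u).exists_isMaxOn (f := fun x => ⟪x, v⟫) (face_nonempty hK hne u)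
    (by fun_prop)

lemma face_eq_inter_inner_eq (hx : x ∈ face K u) : face K u = K ∩ {y | ⟪y, u⟫ = ⟪x, u⟫} := by
  rw [hx.2]
  rfl

lemma inner_sub_le_suppFn_sub (hK : IsCompact K) (hx : x ∈ face K u) (v : Euc n) :
    ⟪x, v - u⟫ ≤ suppFn K v - suppFn K u := by
  rw [inner_sub_right, hx.2]
  exact sub_le_sub_right (inner_le_suppFn hK hx.1 v) _

lemma suppFn_sub_le_inner_sub (hK : IsCompact K) (hx : x ∈ face K v) (u : Euc n) :
    suppFn K v - suppFn K u ≤ ⟪x, v - u⟫ := by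
  rw [inner_sub_right, hx.2]
  exact sub_le_sub_left (inner_le_suppFn hK hx.1 u) _

lemma eventually_forall_mem_face_inner_lt (hK : IsCompact K) {M : ℝ}
    (h : ∀ x ∈ face K u, ⟪x, v⟫ < M) :
    ∀ᶠ w in 𝓝 (u, v), ∀ x ∈ face K w.1, ⟪x, w.2⟫ < M := by
  have key : ∀ᶠ w in 𝓝 (u, v), ∀ x ∈ K, x ∈ face K w.1 → ⟪x, w.2⟫ < M := by
    refine hK.eventually_forall_of_forall_eventually fun x hx => ?_
    by_cases hxu : x ∈ face K u
    · have hcont : Continuous fun z : (Euc n × Euc n) × Euc n => ⟪z.2, z.1.2⟫ := by fun_prop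
      filter_upwards [hcont.continuousAt.eventually_lt_const (h x hxu)] with z hz _ using hz
    · obtain ⟨y, hy⟩ := face_nonempty hK ⟨x, hx⟩ u
      have hxy : ⟪x, u⟫ < ⟪y, u⟫ :=
        (inner_le_of_mem_face hK hy hx).lt_of_ne fun heq => hxu ⟨hx, heq.trans hy.2⟩
      have hopen : IsOpen {z : (Euc n × Euc n) × Euc n | ⟪z.2, z.1.1⟫ < ⟪y, z.1.1⟫} :=
        isOpen_lt (by fun_prop) (by fun_prop)
      filter_upwards [hopen.mem_nhds hxy] with z hz hzface
      exact absurd (inner_le_of_mem_face hK hzface hy.1) (not_le.2 hz)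
  exact key.mono fun w hw x hx => hw x hx.1 hx

/-- Danskin's theorem for support functions. -/
lemma hasDerivWithinAt_suppFn_comp (hK : IsCompact K) {γ : ℝ → Euc n} {γ' : Euc n} {t : ℝ}
    (hγ : HasDerivWithinAt γ γ' (Ioi t) t) (hx : x ∈ face K (γ t))
    (hmax : ∀ y ∈ face K (γ t), ⟪y, γ'⟫ ≤ ⟪x, γ'⟫) :
    HasDerivWithinAt (fun s => suppFn K (γ s)) ⟪x, γ'⟫ (Ioi t) t := by
  have hslope : Tendsto (slope γ t) (𝓝[>] t) (𝓝 γ') :=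
    (hasDerivWithinAt_iff_tendsto_slope' self_notMem_Ioi).1 hγ
  rw [hasDerivWithinAt_iff_tendsto_slope' self_notMem_Ioi, tendsto_order]
  constructor
  · intro a ha
    have hlower : ∀ᶠ s in 𝓝[>] t, a < ⟪x, slope γ t s⟫ :=
      (tendsto_const_nhds.inner hslope).eventually_const_lt ha
    filter_upwards [hlower, self_mem_nhdsWithin] with s has (hts : t < s)
    refine has.trans_le ?_
    rw [slope_def_module, slope_def_module, real_inner_smul_right, smul_eq_mul]
    exact mul_le_mul_of_nonneg_left (inner_sub_le_suppFn_sub hK hx (γ s))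
      (inv_nonneg.2 (sub_pos.2 hts).le)
  · intro a ha
    have hupper : ∀ᶠ s in 𝓝[>] t, ∀ y ∈ face K (γ s), ⟪y, slope γ t s⟫ < a :=
      (hγ.continuousWithinAt.prodMk_nhds hslope).eventually
        (eventually_forall_mem_face_inner_lt hK fun y hy => (hmax y hy).trans_lt ha)
    filter_upwards [hupper, self_mem_nhdsWithin] with s hsa (hts : t < s)
    obtain ⟨y, hy⟩ := face_nonempty hK ⟨x, hx.1⟩ (γ s)
    refine lt_of_le_of_lt ?_ (hsa y hy)
    rw [slope_def_module, slope_def_module, real_inner_smul_right, smul_eq_mul]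
    exact mul_le_mul_of_nonneg_left (suppFn_sub_le_inner_sub hK hy (γ t))
      (inv_nonneg.2 (sub_pos.2 hts).le)

lemma suppFn_image_linearIsometryEquiv (ρ : Euc n ≃ₗᵢ[ℝ] Euc n) (K : Set (Euc n)) (u : Euc n) :
    suppFn (ρ '' K) (ρ u) = suppFn K u := by
  simp only [suppFn, image_image, LinearIsometryEquiv.inner_map_map]

lemma apply_mem_face_image (ρ : Euc n ≃ₗᵢ[ℝ] Euc n) (hx : x ∈ face K u) :
    ρ x ∈ face (ρ '' K) (ρ u) :=
  ⟨mem_image_of_mem ρ hx.1, by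
    rw [suppFn_image_linearIsometryEquiv, LinearIsometryEquiv.inner_map_map, hx.2]⟩

end SupportFunction

lemma rightDeriv_eq {f : ℝ → ℝ} {f' t : ℝ} (hf : HasDerivWithinAt f f' (Ioi t) t) :
    rightDeriv f t = f' := by
  rw [hasDerivWithinAt_iff_tendsto_slope' self_notMem_Ioi, slope_fun_def_field] at hf
  exact hf.limUnder_eq

section Meridian

variable {n : ℕ} {K : Set (Euc n)} {ub x y : Euc n} {t : ℝ}

lemma one_sub_sq_pos (ht : t ∈ Ioo (-1 : ℝ) 1) : 0 < 1 - t ^ 2 := by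
  nlinarith [ht.1, ht.2]

lemma hasDerivAt_sqrt_one_sub_sq (ht : t ∈ Ioo (-1 : ℝ) 1) :
    HasDerivAt (fun s : ℝ => √(1 - s ^ 2)) (-(t / √(1 - t ^ 2))) t := by
  convert ((hasDerivAt_pow 2 t).const_sub 1).sqrt (one_sub_sq_pos ht).ne' using 1
  simp
  field_simp

/-- The point at height `t` on the meridian through `ub` of the unit sphere with axis `e_n`. It is
the direction in which `hbar` evaluates the support function. -/
noncomputable def meridian (ub : Euc n) (t : ℝ) : Euc n :=
  t • eAx n + √(1 - t ^ 2) • ub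

lemma inner_meridian (x ub : Euc n) (t : ℝ) :
    ⟪x, meridian ub t⟫ = t * ⟪x, eAx n⟫ + √(1 - t ^ 2) * ⟪x, ub⟫ := by
  simp only [meridian, inner_add_right, real_inner_smul_right]

lemma hasDerivAt_meridian (ub : Euc n) (ht : t ∈ Ioo (-1 : ℝ) 1) :
    HasDerivAt (meridian ub) (eAx n - (t / √(1 - t ^ 2)) • ub) t := by
  simpa only [one_smul, neg_smul, ← sub_eq_add_neg] using!
    ((hasDerivAt_id t).smul_const (eAx n)).add ((hasDerivAt_sqrt_one_sub_sq ht).smul_const ub)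

lemma smul_meridian_sub_smul_deriv (ub : Euc n) (ht : t ∈ Ioo (-1 : ℝ) 1) :
    √(1 - t ^ 2) • (meridian ub t - t • (eAx n - (t / √(1 - t ^ 2)) • ub)) = ub := by
  have hs : √(1 - t ^ 2) ≠ 0 := (Real.sqrt_pos.2 (one_sub_sq_pos ht)).ne'
  have hs2 : √(1 - t ^ 2) ^ 2 = 1 - t ^ 2 := Real.sq_sqrt (one_sub_sq_pos ht).le
  unfold meridian
  match_scalars
  · ring
  · field_simp
    linear_combination hs2

lemma continuous_meridian (ub : Euc n) : Continuous (meridian ub) := by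
  unfold meridian
  fun_prop

lemma meridian_of_sq_eq_one (ub : Euc n) (ht : t ^ 2 = 1) : meridian ub t = t • eAx n := by
  simp [meridian, ht]

lemma inner_le_inner_of_mem_face_meridian (hK : IsCompact K) (ht : t ∈ Ioo (-1 : ℝ) 1)
    (hx : x ∈ face K (meridian ub t)) (hy : y ∈ K) (hxy : t * ⟪x, eAx n⟫ ≤ t * ⟪y, eAx n⟫) :
    ⟪y, ub⟫ ≤ ⟪x, ub⟫ := by
  have h := inner_le_of_mem_face hK hx hy
  rw [inner_meridian, inner_meridian] at h
  exact le_of_mul_le_mul_left (by linarith) (Real.sqrt_pos.2 (one_sub_sq_pos ht))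

lemma exists_mem_face_meridian_RC_eq_inner (hK : IsCompact K) (hne : K.Nonempty) (ub : Euc n)
    (ht : t ∈ Ioo (-1 : ℝ) 1) : ∃ x ∈ face K (meridian ub t), RC K ub t = ⟪x, ub⟫ := by
  set γ' := eAx n - (t / √(1 - t ^ 2)) • ub
  obtain ⟨x, hx, hmax⟩ := exists_mem_face_forall_inner_le hK hne (meridian ub t) γ'
  have hderiv : rightDeriv (hbar K ub) t = ⟪x, γ'⟫ :=
    rightDeriv_eq <| hasDerivWithinAt_suppFn_comp hK
      (hasDerivAt_meridian ub ht).hasDerivWithinAt hx hmax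
  refine ⟨x, hx, ?_⟩
  calc RC K ub t = √(1 - t ^ 2) * (⟪x, meridian ub t⟫ - t * ⟪x, γ'⟫) := by
        rw [RC, hderiv, hx.2]
        rfl
    _ = ⟪x, √(1 - t ^ 2) • (meridian ub t - t • γ')⟫ := by
        simp only [inner_sub_right, real_inner_smul_right]
    _ = ⟪x, ub⟫ := by rw [smul_meridian_sub_smul_deriv ub ht]

lemma tendsto_RC_pole (hK : IsCompact K) {σ : ℝ} (hσ : σ ^ 2 = 1) (hx : x ∈ face K (σ • eAx n))
    (hmax : ∀ y ∈ face K (σ • eAx n), ⟪y, ub⟫ ≤ ⟪x, ub⟫) :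
    Tendsto (RC K ub) (𝓝[Ioo (-1) 1] σ) (𝓝 ⟪x, ub⟫) := by
  have hne : K.Nonempty := ⟨x, hx.1⟩
  rw [tendsto_order]
  constructor
  · intro a ha
    have hσt : ∀ᶠ t in 𝓝[Ioo (-1) 1] σ, 0 < σ * t :=
      ((continuous_const_mul σ).continuousWithinAt).eventually_const_lt (by nlinarith)
    filter_upwards [hσt, self_mem_nhdsWithin] with t hσt ht
    obtain ⟨y, hy, hRC⟩ := exists_mem_face_meridian_RC_eq_inner hK hne ub ht
    rw [hRC]
    refine ha.trans_le (inner_le_inner_of_mem_face_meridian hK ht hy hx.1 ?_)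
    have hheight : σ * ⟪y, eAx n⟫ ≤ σ * ⟪x, eAx n⟫ := by
      simpa only [real_inner_smul_right] using inner_le_of_mem_face hK hx hy.1
    calc t * ⟪y, eAx n⟫ = σ * t * (σ * ⟪y, eAx n⟫) := by
          linear_combination (-(t * ⟪y, eAx n⟫)) * hσ
      _ ≤ σ * t * (σ * ⟪x, eAx n⟫) := mul_le_mul_of_nonneg_left hheight hσt.le
      _ = t * ⟪x, eAx n⟫ := by linear_combination (t * ⟪x, eAx n⟫) * hσ
  · intro a ha
    have hγ : Tendsto (fun t => (meridian ub t, ub)) (𝓝[Ioo (-1) 1] σ) (𝓝 (σ • eAx n, ub)) := by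
      rw [← meridian_of_sq_eq_one ub hσ]
      exact (continuous_meridian ub).continuousWithinAt.prodMk_nhds tendsto_const_nhds
    have hupper := hγ.eventually
      (eventually_forall_mem_face_inner_lt hK fun y hy => (hmax y hy).trans_lt ha)
    filter_upwards [hupper, self_mem_nhdsWithin] with t hta ht
    obtain ⟨y, hy, hRC⟩ := exists_mem_face_meridian_RC_eq_inner hK hne ub ht
    exact hRC.trans_lt (hta y hy)

end Meridian

section Axis

variable {n : ℕ} {ub w : Euc n} {t : ℝ}

lemma norm_eAx (n : ℕ) : ‖eAx n‖ = 1 := by simp [eAx]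

lemma inner_eAx_self (n : ℕ) : ⟪eAx n, eAx n⟫ = 1 :=
  inner_self_eq_one_of_norm_eq_one (norm_eAx n)

lemma inner_eAx_smul_add (hw : ⟪eAx n, w⟫ = 0) (a : ℝ) : ⟪eAx n, a • eAx n + w⟫ = a := by
  rw [inner_add_right, real_inner_smul_right, inner_eAx_self, hw, mul_one, add_zero]

lemma inner_eAx_sub_smul (y : Euc n) : ⟪eAx n, y - ⟪eAx n, y⟫ • eAx n⟫ = 0 := by
  rw [inner_sub_right, real_inner_smul_right, inner_eAx_self, mul_one, sub_self]

lemma inner_eAx_smul (hw : ⟪eAx n, w⟫ = 0) (c : ℝ) : ⟪eAx n, c • w⟫ = 0 := by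
  rw [real_inner_smul_right, hw, mul_zero]

lemma inner_eAx_meridian (horth : ⟪eAx n, ub⟫ = 0) (t : ℝ) : ⟪eAx n, meridian ub t⟫ = t :=
  inner_eAx_smul_add (inner_eAx_smul horth _) t

lemma norm_meridian (hub : ‖ub‖ = 1) (horth : ⟪eAx n, ub⟫ = 0) (ht : t ^ 2 ≤ 1) :
    ‖meridian ub t‖ = 1 := by
  refine (sq_eq_sq₀ (norm_nonneg _) zero_le_one).1 ?_
  rw [← real_inner_self_eq_norm_sq, inner_meridian, real_inner_comm, inner_eAx_meridian horth,
    real_inner_comm, inner_meridian, real_inner_comm, horth, real_inner_self_eq_norm_sq, hub]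
  linear_combination Real.sq_sqrt (sub_nonneg.2 ht)

end Axis

lemma exists_linearIsometryEquiv_apply_eq {E : Type*} [NormedAddCommGroup E]
    [InnerProductSpace ℝ E] {e v w : E} (he : ⟪e, v⟫ = ⟪e, w⟫) (hvw : ‖v‖ = ‖w‖) :
    ∃ ρ : E ≃ₗᵢ[ℝ] E, ρ e = e ∧ ρ v = w := by
  refine ⟨(ℝ ∙ (v - w))ᗮ.reflection, ?_, Submodule.reflection_sub hvw⟩
  rw [Submodule.reflection_eq_self_iff, Submodule.mem_orthogonal_singleton_iff_inner_left,
    inner_sub_right, he, sub_self]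

/-- The horizontal disk of radius `r` centred at the point `a e_n` of the axis. -/
def horizontalDisk (n : ℕ) (a r : ℝ) : Set (Euc n) :=
  (fun w => a • eAx n + w) '' {w | ⟪eAx n, w⟫ = 0 ∧ ‖w‖ ≤ r}

namespace IsRevBody

variable {n : ℕ} {C : Set (Euc n)} {ub u v w x : Euc n} {a : ℝ}

lemma nonempty (hC : IsRevBody C) : C.Nonempty := hC.1

lemma isCompact (hC : IsRevBody C) : IsCompact C := hC.2.1

lemma convex (hC : IsRevBody C) : Convex ℝ C := hC.2.2.1

lemma image_eq (hC : IsRevBody C) {ρ : Euc n ≃ₗᵢ[ℝ] Euc n} (hρ : ρ (eAx n) = eAx n) :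
    ρ '' C = C :=
  hC.2.2.2 ρ hρ

lemma smul_add_mem_of_norm_eq (hC : IsRevBody C) (hv : ⟪eAx n, v⟫ = 0) (hw : ⟪eAx n, w⟫ = 0)
    (hvw : ‖v‖ = ‖w‖) (h : a • eAx n + v ∈ C) : a • eAx n + w ∈ C := by
  obtain ⟨ρ, hρ, rfl⟩ := exists_linearIsometryEquiv_apply_eq (hv.trans hw.symm) hvw
  rw [← hC.image_eq hρ]
  exact ⟨_, h, by rw [map_add, map_smul, hρ]⟩

lemma smul_add_smul_mem (hC : IsRevBody C) (hv : ⟪eAx n, v⟫ = 0) (h : a • eAx n + v ∈ C)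
    {c : ℝ} (hc : |c| ≤ 1) : a • eAx n + c • v ∈ C := by
  have hneg : a • eAx n + -v ∈ C :=
    hC.smul_add_mem_of_norm_eq hv (by rw [inner_neg_right, hv, neg_zero]) (norm_neg v).symm h
  obtain ⟨hc₁, hc₂⟩ := abs_le.1 hc
  convert hC.convex h hneg (show 0 ≤ (1 + c) / 2 by linarith) (show 0 ≤ (1 - c) / 2 by linarith)
    (by ring) using 1
  module

lemma smul_add_mem_of_norm_le (hC : IsRevBody C) (hv : ⟪eAx n, v⟫ = 0) (hw : ⟪eAx n, w⟫ = 0)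
    (hwv : ‖w‖ ≤ ‖v‖) (h : a • eAx n + v ∈ C) : a • eAx n + w ∈ C := by
  have hnorm : ‖(‖w‖ / ‖v‖) • v‖ = ‖w‖ := by
    rw [norm_smul, norm_div, norm_norm, norm_norm]
    exact div_mul_cancel_of_imp fun hv0 => le_antisymm (hwv.trans_eq hv0) (norm_nonneg w)
  refine hC.smul_add_mem_of_norm_eq (inner_eAx_smul hv _) hw hnorm (hC.smul_add_smul_mem hv h ?_)
  rw [abs_of_nonneg (by positivity)]
  exact div_le_one_of_le₀ hwv (norm_nonneg v)

lemma inter_height_eq_horizontalDisk (hC : IsRevBody C) (hub : ‖ub‖ = 1)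
    (horth : ⟪eAx n, ub⟫ = 0) (hx : x ∈ C)
    (hmax : ∀ y ∈ C, ⟪eAx n, y⟫ = ⟪eAx n, x⟫ → ⟪y, ub⟫ ≤ ⟪x, ub⟫) :
    C ∩ {y | ⟪eAx n, y⟫ = ⟪eAx n, x⟫} = horizontalDisk n ⟪eAx n, x⟫ ⟪x, ub⟫ := by
  set a := ⟪eAx n, x⟫
  refine Subset.antisymm ?_ ?_
  · rintro y ⟨hy, hya : ⟪eAx n, y⟫ = a⟩
    have hw : ⟪eAx n, y - a • eAx n⟫ = 0 := hya ▸ inner_eAx_sub_smul y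
    set w := y - a • eAx n
    have hz : ⟪eAx n, ‖w‖ • ub⟫ = 0 := inner_eAx_smul horth _
    have hzC : a • eAx n + ‖w‖ • ub ∈ C :=
      hC.smul_add_mem_of_norm_eq hw hz (by rw [norm_smul, norm_norm, hub, mul_one])
        (by rwa [add_sub_cancel])
    refine ⟨w, ⟨hw, ?_⟩, add_sub_cancel _ _⟩
    calc ‖w‖ = ⟪a • eAx n + ‖w‖ • ub, ub⟫ := by
          rw [inner_add_left, real_inner_smul_left, real_inner_smul_left, horth,
            inner_self_eq_one_of_norm_eq_one hub, mul_zero, zero_add, mul_one]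
      _ ≤ ⟪x, ub⟫ := hmax _ hzC (inner_eAx_smul_add hz a)
  · rintro _ ⟨w, ⟨hw, hwx⟩, rfl⟩
    have hdist : ⟪x, ub⟫ ≤ ‖x - a • eAx n‖ :=
      calc ⟪x, ub⟫ = ⟪x - a • eAx n, ub⟫ := by
            rw [inner_sub_left, real_inner_smul_left, horth, mul_zero, sub_zero]
        _ ≤ ‖x - a • eAx n‖ := by
            simpa only [hub, mul_one] using real_inner_le_norm (x - a • eAx n) ub
    exact ⟨hC.smul_add_mem_of_norm_le (inner_eAx_sub_smul x) hw (hwx.trans hdist)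
      (by rwa [add_sub_cancel]), inner_eAx_smul_add hw a⟩

lemma exists_mem_face_inter_height_eq (hC : IsRevBody C) (hub : ‖ub‖ = 1)
    (horth : ⟪eAx n, ub⟫ = 0) (hu : ‖u‖ = 1) (ht : ⟪eAx n, u⟫ ∈ Ioo (-1 : ℝ) 1) :
    ∃ x ∈ face C u, C ∩ {y | ⟪eAx n, y⟫ = ⟪eAx n, x⟫} =
      horizontalDisk n ⟪eAx n, x⟫ (RC C ub ⟪eAx n, u⟫) := by
  set t := ⟪eAx n, u⟫
  obtain ⟨x, hx, hRC⟩ := exists_mem_face_meridian_RC_eq_inner hC.isCompact hC.nonempty ub ht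
  obtain ⟨ρ, hρ, hρu⟩ := exists_linearIsometryEquiv_apply_eq (inner_eAx_meridian horth t)
    ((norm_meridian hub horth (sub_pos.1 (one_sub_sq_pos ht)).le).trans hu.symm)
  have hheight : ⟪eAx n, ρ x⟫ = ⟪eAx n, x⟫ := by
    simpa only [hρ] using ρ.inner_map_map (eAx n) x
  refine ⟨ρ x, ?_, ?_⟩
  · simpa only [hC.image_eq hρ, hρu] using apply_mem_face_image ρ hx
  · rw [hheight, hRC]
    refine hC.inter_height_eq_horizontalDisk hub horth hx.1 fun y hy hyx => ?_
    refine inner_le_inner_of_mem_face_meridian hC.isCompact ht hx hy ?_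
    rw [real_inner_comm, ← hyx, real_inner_comm]

lemma exists_tendsto_RC_face_pole_eq (hC : IsRevBody C) (hub : ‖ub‖ = 1)
    (horth : ⟪eAx n, ub⟫ = 0) {σ : ℝ} (hσ : σ ^ 2 = 1) :
    ∃ r, Tendsto (RC C ub) (𝓝[Ioo (-1) 1] σ) (𝓝 r) ∧
      face C (σ • eAx n) = horizontalDisk n (σ * hbar C ub σ) r := by
  obtain ⟨x, hx, hmax⟩ :=
    exists_mem_face_forall_inner_le hC.isCompact hC.nonempty (σ • eAx n) ub
  refine ⟨⟪x, ub⟫, tendsto_RC_pole hC.isCompact hσ hx hmax, ?_⟩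
  have hσ0 : σ ≠ 0 := fun h => by norm_num [h] at hσ
  have hface : face C (σ • eAx n) = C ∩ {y | ⟪eAx n, y⟫ = ⟪eAx n, x⟫} := by
    simp only [face_eq_inter_inner_eq hx, real_inner_smul_right, mul_right_inj' hσ0,
      real_inner_comm (eAx n)]
  have hheight : σ * hbar C ub σ = ⟪eAx n, x⟫ := by
    have hhbar : hbar C ub σ = ⟪x, σ • eAx n⟫ := by
      rw [hx.2, ← meridian_of_sq_eq_one ub hσ]
      rfl
    rw [hhbar, real_inner_smul_right, real_inner_comm]
    linear_combination ⟪eAx n, x⟫ * hσ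
  rw [hheight, hface]
  exact hC.inter_height_eq_horizontalDisk hub horth hx.1
    fun y hy hyx => hmax y (hface.symm.subset ⟨hy, hyx⟩)

end IsRevBody

/-- Horizontal cross-sections of a body of revolution through a boundary
point with outer normal `u` are disks of radius `R_C(⟨e_n,u⟩)`, and the faces at the poles
`±e_n` are disks of radius `lim_{t→±1} R_C(t)` at heights `±h̄_C(±1)`. -/
theorem revBody_cross_sections {n : ℕ} (hn : 1 ≤ n) (C : Set (Euc n)) (hC : IsRevBody C)
    (ub : Euc n) (hub : ‖ub‖ = 1) (horth : ⟪eAx n, ub⟫ = 0)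
    (u : Euc n) (hu : ‖u‖ = 1) (ht : ⟪eAx n, u⟫ ∈ Set.Ioo (-1 : ℝ) 1) :
    (∃ x ∈ face C u,
      C ∩ {y : Euc n | ⟪eAx n, y⟫ = ⟪eAx n, x⟫} =
        (fun w => ⟪eAx n, x⟫ • eAx n + w) ''
          {w : Euc n | ⟪eAx n, w⟫ = 0 ∧ ‖w‖ ≤ RC C ub ⟪eAx n, u⟫}) ∧
    (∃ rp : ℝ, Tendsto (RC C ub) (𝓝[<] (1 : ℝ)) (𝓝 rp) ∧
      face C (eAx n) =
        (fun w => hbar C ub 1 • eAx n + w) ''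
          {w : Euc n | ⟪eAx n, w⟫ = 0 ∧ ‖w‖ ≤ rp}) ∧
    (∃ rm : ℝ, Tendsto (RC C ub) (𝓝[>] (-1 : ℝ)) (𝓝 rm) ∧
      face C (-eAx n) =
        (fun w => (-hbar C ub (-1)) • eAx n + w) ''
          {w : Euc n | ⟪eAx n, w⟫ = 0 ∧ ‖w‖ ≤ rm}) := by
  refine ⟨hC.exists_mem_face_inter_height_eq hub horth hu ht, ?_, ?_⟩
  · simpa only [one_smul, one_mul, nhdsWithin_Ioo_eq_nhdsLT (show (-1 : ℝ) < 1 by norm_num)]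
      using! hC.exists_tendsto_RC_face_pole_eq hub horth (one_pow 2)
  · simpa only [neg_one_smul, neg_one_mul,
      nhdsWithin_Ioo_eq_nhdsGT (show (-1 : ℝ) < 1 by norm_num)]
      using! hC.exists_tendsto_RC_face_pole_eq hub horth (neg_one_sq (R := ℝ))
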